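/- Let n ≥ 2, let 1 ≤ s ≤ n−1, and let C_s be the cyclic shift by s on {1,…,n}. Let R be a row-settled Strang canonical permutation of {1,…,n} that is row-sign-equivalent to C_s. Then iterating the reduction map starting from R reaches the identity in at most n − 1 steps, i.e., in at most as many steps as iterating the reduction map starting from C_s requires. -/

import Mathlib

/-- The bandwidth of a permutation `σ` of `{0,…,n-1}`: `max_i |σ(i) - i|`. -/
def bandwidth {n : ℕ} (σ : Equiv.Perm (Fin n)) : ℕ :=
  Finset.univ.sup fun i : Fin n => ((σ i : ℤ) - (i : ℤ)).natAbs

/-- `c` is a cut point of `σ` if `σ` maps the initial segment `{0,…,c}` onto itself. -/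
def IsCutPoint {n : ℕ} (σ : Equiv.Perm (Fin n)) (c : Fin n) : Prop :=
  ∀ j : Fin n, j ≤ c → σ j ≤ c

/-- Indices `i ≤ j` lie in the same section of `σ` if there is no cut point `c`
with `i ≤ c < j`. -/
def SameSection {n : ℕ} (σ : Equiv.Perm (Fin n)) (i j : Fin n) : Prop :=
  i ≤ j ∧ ∀ c : Fin n, i ≤ c → c < j → ¬ IsCutPoint σ c

/-- Unordered version of `SameSection`. -/
def InSameSection {n : ℕ} (σ : Equiv.Perm (Fin n)) (i j : Fin n) : Prop :=
  SameSection σ i j ∨ SameSection σ j i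

/-- `σ` is upper-canonical: for `i < j` with `σ(i) > i` and `σ(j) > j`, `σ(i) < σ(j)`. -/
def UpperCanonical {n : ℕ} (σ : Equiv.Perm (Fin n)) : Prop :=
  ∀ i j : Fin n, i < j → i < σ i → j < σ j → σ i < σ j

/-- `σ` is lower-canonical: for `i < j` with `σ(i) < i` and `σ(j) < j`, `σ(i) < σ(j)`. -/
def LowerCanonical {n : ℕ} (σ : Equiv.Perm (Fin n)) : Prop :=
  ∀ i j : Fin n, i < j → σ i < i → σ j < j → σ i < σ j

/-- `σ` is Strang canonical if it is both upper- and lower-canonical. -/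
def StrangCanonical {n : ℕ} (σ : Equiv.Perm (Fin n)) : Prop :=
  UpperCanonical σ ∧ LowerCanonical σ

/-- `σ` is row-settled: no indices `i < j` in the same section
with `σ(i) < i` (negative row) and `σ(j) > j` (positive row). -/
def RowSettled {n : ℕ} (σ : Equiv.Perm (Fin n)) : Prop :=
  ∀ i j : Fin n, i < j → SameSection σ i j → ¬ (σ i < i ∧ j < σ j)

/-- `σ` is settled if it is row-settled or column-settled
(column-settled means `σ⁻¹` is row-settled). -/
def Settled {n : ℕ} (σ : Equiv.Perm (Fin n)) : Prop :=
  RowSettled σ ∨ RowSettled σ⁻¹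

/-- The reducing permutation of `σ`: the product of the (pairwise disjoint)
transpositions `(i, i+1)` over all `i` with `σ(i) > i` and `σ(i+1) < i+1`. -/
def reducingPerm {n : ℕ} (σ : Equiv.Perm (Fin n)) : Equiv.Perm (Fin n) :=
  ((List.finRange n).filterMap fun i : Fin n =>
    if h : (i : ℕ) + 1 < n then
      let j : Fin n := ⟨(i : ℕ) + 1, h⟩
      if i < σ i ∧ σ j < j then some (Equiv.swap i j) else none
    else none).prod

/-- The reduction of `σ` is `σ` composed with its reducing permutation. -/
def reduction {n : ℕ} (σ : Equiv.Perm (Fin n)) : Equiv.Perm (Fin n) :=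
  σ * reducingPerm σ

/-- A bubblesort step for `σ`: a nonidentity permutation `t` that is a product of
pairwise disjoint adjacent transpositions `(i, i+1)`, each satisfying `σ(i) > σ(i+1)`. -/
def IsBubbleStep {n : ℕ} (σ t : Equiv.Perm (Fin n)) : Prop :=
  t ≠ 1 ∧ ∃ l : List (Fin n),
    l.Pairwise (fun i j => (i : ℕ) + 2 ≤ (j : ℕ)) ∧
    (∀ i ∈ l, ∃ h : (i : ℕ) + 1 < n, σ ⟨(i : ℕ) + 1, h⟩ < σ i) ∧
    t = (l.map fun i : Fin n =>
      (if h : (i : ℕ) + 1 < n then Equiv.swap i ⟨(i : ℕ) + 1, h⟩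
       else 1 : Equiv.Perm (Fin n))).prod

/-- The number of inversions of `σ`: pairs `i < j` with `σ(i) > σ(j)`. -/
def inversions {n : ℕ} (σ : Equiv.Perm (Fin n)) : ℕ :=
  (Finset.univ.filter fun p : Fin n × Fin n => p.1 < p.2 ∧ σ p.2 < σ p.1).card

/-- The cyclic shift by `s` on `{0,…,n-1}`: `i ↦ (i + s) mod n`. -/
def cyclicShift (n s : ℕ) : Equiv.Perm (Fin n) := (finRotate n) ^ s

/-! A permutation sign-equivalent to a cyclic shift has no fixed points, and a Strang canonical
permutation without fixed points avoids the pattern 321. Every 321-avoiding permutation is sorted by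
at most `n - 1` reductions. Indeed, reducing destroys inversions and creates none, so the pattern
stays avoided; and in each step a value `v` that is left of its home moves one place to the right
unless its right neighbour is a larger value `u` that is also left of its home. The relative order
of `v` and `u` has then been the same from the start, so `u` started, and has its home, at least one
place further right than `v`. By induction on the number `t` of steps, if `v` started at `p` and is
still left of its home, it is at distance at most `n - 1 - p - t` from it. After `n - 1` steps no
value is left of its home, which forces the identity. -/

open Equiv Equiv.Perm

/-- `σ` avoids the pattern 321: it has no decreasing subsequence of length three. -/
def Avoids321 {α : Type*} [LT α] (σ : Perm α) : Prop :=
  ∀ ⦃i j k⦄, i < j → j < k → σ k < σ j → ¬ σ j < σ i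

section LinearOrder

variable {α : Type*} [LinearOrder α] [LocallyFiniteOrderBot α] {σ : Perm α}

theorem exists_gt_apply_le {a c : α} (hac : a ≤ c) (hca : c < σ a) : ∃ b, c < b ∧ σ b ≤ c := by
  by_contra! hinv
  have hinv' : Set.MapsTo σ.symm (Set.Iic c) (Set.Iic c) := fun v hv =>
    not_lt.mp fun hlt => (hinv _ hlt).not_ge (by simpa using hv)
  have : Finite (Set.Iic c) := (Set.finite_Iic c).to_subtype
  exact hca.not_ge (perm_symm_mapsTo_iff_mapsTo.mp hinv' hac)

theorem eq_one_of_forall_le_apply (h : ∀ a, a ≤ σ a) : σ = 1 := by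
  refine Equiv.ext fun a => ((h a).eq_or_lt.resolve_right fun hlt => ?_).symm
  obtain ⟨b, hab, hb⟩ := exists_gt_apply_le le_rfl hlt
  exact (h b).not_gt (hb.trans_lt hab)

theorem Avoids321.apply_lt_apply (hσ : Avoids321 σ) {i j : α} (hij : i < j) (hj : j ≤ σ j) :
    σ i < σ j := by
  by_contra! hle
  have hji : σ j < σ i := hle.lt_of_ne (σ.injective.ne hij.ne')
  obtain ⟨k, hjk, hk⟩ := exists_gt_apply_le hij.le (hj.trans_lt hji)
  exact hσ hij hjk ((hk.trans hj).lt_of_ne (σ.injective.ne hjk.ne')) hji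

theorem Avoids321.symm_apply_lt_symm_apply (hσ : Avoids321 σ) {v w : α} (hvw : v < w)
    (hv : σ.symm v ≤ v) : σ.symm v < σ.symm w := by
  by_contra! hle
  have hlt : σ.symm w < σ.symm v := hle.lt_of_ne (σ.symm.injective.ne hvw.ne')
  exact hvw.not_gt (by simpa using hσ.apply_lt_apply hlt (by simpa using hv))

end LinearOrder

section Fin

variable {n : ℕ} {σ : Perm (Fin n)}

theorem StrangCanonical.avoids321 (hσ : StrangCanonical σ) (hfix : ∀ i, σ i ≠ i) :
    Avoids321 σ := by
  intro i j k hij hjk hkj hji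
  rcases (hfix j).lt_or_gt with hj | hj
  · exact hkj.not_gt (hσ.2 j k hjk hj (hkj.trans (hj.trans hjk)))
  · exact hji.not_gt (hσ.1 i j hij (hij.trans (hj.trans hji)) hj)

theorem cyclicShift_apply_ne {s : ℕ} (hs : 0 < s) (hsn : s < n) (i : Fin n) :
    cyclicShift n s i ≠ i := by
  intro hi
  have hn : 2 ≤ n := by omega
  have hcycle := isCycle_finRotate_of_le hn
  have hmoved : finRotate n i ≠ i := by
    rw [← mem_support, support_finRotate_of_le hn]
    exact Finset.mem_univ i
  have hdvd : n ∣ s := by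
    simpa [hcycle.orderOf, support_finRotate_of_le hn] using
      orderOf_dvd_of_pow_eq_one ((hcycle.pow_eq_one_iff' hmoved).mpr hi)
  exact hsn.not_ge (Nat.le_of_dvd hs hdvd)

/-- The transposition `(i, j)` is a factor of the reducing permutation of `σ`. -/
def IsReducingPair (σ : Perm (Fin n)) (i j : Fin n) : Prop :=
  (j : ℕ) = i + 1 ∧ i < σ i ∧ σ j < j

/-- The factor of the reducing permutation of `σ` indexed by `i`, if there is one. -/
def reducingSwap (σ : Perm (Fin n)) (i : Fin n) : Option (Perm (Fin n)) :=
  if h : (i : ℕ) + 1 < n then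
    let j : Fin n := ⟨(i : ℕ) + 1, h⟩
    if i < σ i ∧ σ j < j then some (swap i j) else none
  else none

theorem reducingPerm_eq_prod (σ : Perm (Fin n)) :
    reducingPerm σ = ((List.finRange n).filterMap (reducingSwap σ)).prod :=
  rfl

theorem reducingSwap_eq_some_iff {i : Fin n} {τ : Perm (Fin n)} :
    reducingSwap σ i = some τ ↔ ∃ j, IsReducingPair σ i j ∧ swap i j = τ := by
  constructor
  · intro h
    simp only [reducingSwap] at h
    split_ifs at h with hi hσ
    exact ⟨_, ⟨rfl, hσ⟩, Option.some.inj h⟩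
  · rintro ⟨⟨j, hj⟩, ⟨rfl, hσ⟩, rfl⟩
    simp only [reducingSwap, dif_pos hj, if_pos hσ]

theorem IsReducingPair.disjoint_swap {i j k l : Fin n} (h : IsReducingPair σ i j)
    (h' : IsReducingPair σ k l) (hik : i ≠ k) : Disjoint (swap i j) (swap k l) := by
  refine disjoint_swap_swap ?_
  grind [IsReducingPair]

theorem pairwise_disjoint_reducingSwap (σ : Perm (Fin n)) :
    ((List.finRange n).filterMap (reducingSwap σ)).Pairwise Disjoint := by
  refine List.Pairwise.filterMap _ (fun i k hik τ hτ τ' hτ' => ?_) (List.nodup_finRange n)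
  obtain ⟨j, hij, rfl⟩ := reducingSwap_eq_some_iff.mp hτ
  obtain ⟨l, hkl, rfl⟩ := reducingSwap_eq_some_iff.mp hτ'
  exact hij.disjoint_swap hkl hik

theorem IsReducingPair.reducingPerm_apply {i j k : Fin n} (h : IsReducingPair σ i j)
    (hk : k = i ∨ k = j) : reducingPerm σ k = swap i j k := by
  have hij : i ≠ j := by grind [IsReducingPair]
  have hmem : swap i j ∈ (List.finRange n).filterMap (reducingSwap σ) :=
    List.mem_filterMap.mpr ⟨i, List.mem_finRange i, reducingSwap_eq_some_iff.mpr ⟨j, h, rfl⟩⟩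
  rw [reducingPerm_eq_prod]
  refine (eq_on_support_mem_disjoint hmem (pairwise_disjoint_reducingSwap σ) k ?_).symm
  simpa [support_swap hij] using hk

theorem exists_isReducingPair_of_reducingPerm_apply_ne {k : Fin n} (hk : reducingPerm σ k ≠ k) :
    ∃ i j, IsReducingPair σ i j ∧ (k = i ∨ k = j) := by
  rw [reducingPerm_eq_prod] at hk
  obtain ⟨τ, hτ, hkτ⟩ := exists_mem_support_of_mem_support_prod (mem_support.mpr hk)
  obtain ⟨i, -, hi⟩ := List.mem_filterMap.mp hτ
  obtain ⟨j, hij, rfl⟩ := reducingSwap_eq_some_iff.mp hi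
  exact ⟨i, j, hij, (swap_apply_ne_self_iff.mp (mem_support.mp hkτ)).2⟩

theorem IsReducingPair.reduction_symm_apply_left {i j : Fin n} (h : IsReducingPair σ i j) :
    (reduction σ).symm (σ i) = j := by
  simp [symm_apply_eq, reduction, h.reducingPerm_apply]

theorem IsReducingPair.reduction_symm_apply_right {i j : Fin n} (h : IsReducingPair σ i j) :
    (reduction σ).symm (σ j) = i := by
  simp [symm_apply_eq, reduction, h.reducingPerm_apply]

theorem reduction_symm_apply_trichotomy (σ : Perm (Fin n)) (v : Fin n) :
    (reduction σ).symm v = σ.symm v ∨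
    ((reduction σ).symm v : ℕ) = σ.symm v + 1 ∧ σ.symm v < v ∨
    ((reduction σ).symm v : ℕ) + 1 = σ.symm v ∧ v < σ.symm v := by
  obtain ⟨k, rfl⟩ := σ.surjective v
  rw [symm_apply_apply]
  by_cases hk : reducingPerm σ k = k
  · left
    simp [symm_apply_eq, reduction, hk]
  · obtain ⟨i, j, h, rfl | rfl⟩ := exists_isReducingPair_of_reducingPerm_apply_ne hk
    · exact .inr (.inl ⟨h.reduction_symm_apply_left ▸ h.1, h.2.1⟩)
    · exact .inr (.inr ⟨h.reduction_symm_apply_right ▸ h.1.symm, h.2.2⟩)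

theorem le_reduction_symm_apply {v : Fin n} (h : v ≤ σ.symm v) : v ≤ (reduction σ).symm v := by
  have := reduction_symm_apply_trichotomy σ v
  omega

theorem reduction_symm_apply_lt_of_lt {v w : Fin n} (hvw : v < w) (h : σ.symm v < σ.symm w) :
    (reduction σ).symm v < (reduction σ).symm w := by
  have hv := reduction_symm_apply_trichotomy σ v
  have hw := reduction_symm_apply_trichotomy σ w
  have hne : (reduction σ).symm v ≠ (reduction σ).symm w := (reduction σ).symm.injective.ne hvw.ne
  omega

theorem avoids321_reduction (hσ : Avoids321 σ) : Avoids321 (reduction σ) := by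
  have inversion {i j : Fin n} (hij : i < j) (h : reduction σ j < reduction σ i) :
      σ.symm (reduction σ i) < σ.symm (reduction σ j) := by
    by_contra! hle
    have := reduction_symm_apply_lt_of_lt h (hle.lt_of_ne (σ.symm.injective.ne h.ne))
    simp only [symm_apply_apply] at this
    exact hij.not_gt this
  intro i j k hij hjk hkj hji
  exact hσ (inversion hij hji) (inversion hjk hkj) (by simpa using hkj) (by simpa using hji)

theorem Avoids321.reduction_symm_apply_eq_add_one_or_blocked (hσ : Avoids321 σ) {v : Fin n}
    (hv : σ.symm v < v) :
    ((reduction σ).symm v : ℕ) = σ.symm v + 1 ∨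
    ∃ u, (σ.symm u : ℕ) = σ.symm v + 1 ∧ v < u ∧ σ.symm u < u := by
  obtain ⟨i, rfl⟩ := σ.surjective v
  rw [symm_apply_apply] at hv ⊢
  obtain ⟨j, hj⟩ : ∃ j : Fin n, (j : ℕ) = i + 1 := ⟨⟨i + 1, by omega⟩, rfl⟩
  rcases lt_or_ge (σ j) j with hlt | hge
  · left
    rw [IsReducingPair.reduction_symm_apply_left ⟨hj, hv, hlt⟩, hj]
  · right
    have hσij : σ i < σ j := hσ.apply_lt_apply (by omega) hge
    exact ⟨σ j, by simpa using hj, hσij, by rw [symm_apply_apply]; omega⟩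

theorem Avoids321.iterate_reduction (hσ : Avoids321 σ) (t : ℕ) : Avoids321 (reduction^[t] σ) :=
  Function.Iterate.rec Avoids321 hσ (fun _ => avoids321_reduction) t

theorem le_iterate_reduction_symm_apply {v : Fin n} (h : v ≤ σ.symm v) (t : ℕ) :
    v ≤ (reduction^[t] σ).symm v :=
  Function.Iterate.rec (fun τ : Perm (Fin n) => v ≤ τ.symm v) h
    (fun _ => le_reduction_symm_apply) t

theorem Avoids321.le_or_add_lt_iterate_reduction_symm_apply (hσ : Avoids321 σ) (t : ℕ) (v : Fin n) :
    v ≤ (reduction^[t] σ).symm v ∨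
    (σ.symm v : ℕ) + t + v < (reduction^[t] σ).symm v + n := by
  induction t generalizing v with
  | zero =>
    right
    simp only [Function.iterate_zero, id_eq]
    omega
  | succ t ih =>
    refine or_iff_not_imp_left.mpr fun hsucc => ?_
    rw [Function.iterate_succ_apply'] at hsucc ⊢
    have hstart : σ.symm v ≤ v := by
      by_contra! h
      exact hsucc (le_reduction_symm_apply (le_iterate_reduction_symm_apply h.le t))
    have hleft : (reduction^[t] σ).symm v < v :=
      lt_of_not_ge fun h => hsucc (le_reduction_symm_apply h)
    rcases (hσ.iterate_reduction t).reduction_symm_apply_eq_add_one_or_blocked hleft with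
      hmove | ⟨u, hpos, hvu, hu⟩
    · have := ih v
      omega
    · have huv := hσ.symm_apply_lt_symm_apply hvu hstart
      have := reduction_symm_apply_trichotomy (reduction^[t] σ) v
      have := ih u
      omega

end Fin

theorem stmt_9_general {n : ℕ} (R : Perm (Fin n)) (hR : Avoids321 R) :
    ∃ q ≤ n - 1, reduction^[q] R = 1 := by
  refine ⟨n - 1, le_rfl, ?_⟩
  have hle (v : Fin n) : v ≤ (reduction^[n - 1] R).symm v := by
    have := hR.le_or_add_lt_iterate_reduction_symm_apply (n - 1) v
    omega
  exact inv_eq_one.mp (eq_one_of_forall_le_apply hle)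

/-- A row-settled Strang canonical permutation that is row-sign-equivalent to
the cyclic shift `C_s` is brought to the identity by at most `n - 1` reduction steps. -/
theorem stmt_9 (n : ℕ) (hn : 2 ≤ n) (s : ℕ) (hs1 : 1 ≤ s) (hs2 : s ≤ n - 1)
    (R : Equiv.Perm (Fin n)) (hrs : RowSettled R) (hsc : StrangCanonical R)
    (hsign : ∀ i : Fin n, ((R i : ℤ) - (i : ℤ)).sign = ((cyclicShift n s i : ℤ) - (i : ℤ)).sign) :
    ∃ q ≤ n - 1, reduction^[q] R = 1 := by
  refine stmt_9_general R (hsc.avoids321 fun i hi => cyclicShift_apply_ne hs1 (by omega) i ?_)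
  have hdiff := Int.sign_eq_zero_iff_zero.mp (by simpa [hi] using (hsign i).symm)
  omega
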